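/- arXiv:2207.09053 — 3 statements merged into one kernel-verified Lean document; each statement's English description precedes it below -/
import Mathlib

section
/- For a positive integer n, the number n! is a 4-layered number if and only if n ≥ 9. -/
/-- A positive integer `n` is `k`-layered if the set of all positive divisors of `n`
can be partitioned into `k` pairwise disjoint subsets (here given by the fibers of a
coloring `c`) each of which has the same sum. -/
def IsKLayered (n k : ℕ) : Prop :=
  ∃ c : ℕ → Fin k,
    ∀ i j : Fin k,
      ∑ d ∈ n.divisors.filter (fun d => c d = i), d =
      ∑ d ∈ n.divisors.filter (fun d => c d = j), d

/-!
For `n ≥ 11` there are two primes `q < p` in `(n / 2, n]`, both of exponent `1` in `n!`. Split off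
from `n!` the coprime parts `2 ^ a * p` and `3 ^ b * 5 ^ c * 7 ^ d`, the latter multiplied by `q`
when `q ≠ 7`. For each of them the subset sums of its divisors fill an interval that omits at most
the values close to `0` and to the full sum, and the full sum is even because of the factor `p + 1`
or `q + 1`. So both parts are `2`-layered, their product is `4`-layered, and multiplying by the
coprime rest of `n!` keeps it so. The two primes come from Bertrand's estimate of the central
binomial coefficient. The numbers `9!` and `10!` have explicit partitions, while `σ(n!) < 4 * n!`
for `n ≤ 8`.
-/

open Finset

theorem sum_divisors_mul_filter_gcd {a b : ℕ} (hab : a.Coprime b) (P Q : ℕ → Prop)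
    [DecidablePred P] [DecidablePred Q] :
    ∑ d ∈ (a * b).divisors with P (d.gcd a) ∧ Q (d.gcd b), d =
      (∑ x ∈ a.divisors with P x, x) * ∑ y ∈ b.divisors with Q y, y := by
  have gcd_mul : ∀ x ∈ a.divisors ×ˢ b.divisors,
      (x.1 * x.2).gcd a = x.1 ∧ (x.1 * x.2).gcd b = x.2 := by
    rintro ⟨x, y⟩ hxy
    simp only [mem_product, Nat.mem_divisors] at hxy
    exact ⟨by rw [(hab.coprime_dvd_right hxy.2.1).symm.gcd_mul_right_cancel x,
        Nat.gcd_eq_left hxy.1.1],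
      by rw [(hab.coprime_dvd_left hxy.1.1).gcd_mul_left_cancel y, Nat.gcd_eq_left hxy.2.1]⟩
  rw [Nat.divisors_mul, Finset.mul_def, filter_image, sum_image
    (hab.mul_injOn_divisors.mono (coe_subset.2 (filter_subset _ _))), sum_mul_sum, ← sum_product',
    ← filter_product]
  exact sum_congr (filter_congr fun x hx => by simp only [gcd_mul x hx]) fun _ _ => rfl

namespace IsKLayered

variable {a b k l n : ℕ}

theorem one (n : ℕ) : IsKLayered n 1 :=
  ⟨0, fun i j => by rw [Subsingleton.elim i j]⟩

theorem mul (hab : a.Coprime b) (ha : IsKLayered a k) (hb : IsKLayered b l) :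
    IsKLayered (a * b) (k * l) := by
  obtain ⟨c, hc⟩ := ha
  obtain ⟨e, he⟩ := hb
  refine ⟨fun d => finProdFinEquiv (c (d.gcd a), e (d.gcd b)), fun i j => ?_⟩
  simp only [← Equiv.eq_symm_apply finProdFinEquiv, Prod.ext_iff]
  rw [sum_divisors_mul_filter_gcd hab (c · = _) (e · = _),
    sum_divisors_mul_filter_gcd hab (c · = _) (e · = _), hc, he]

theorem mul_right (hab : a.Coprime b) (ha : IsKLayered a k) : IsKLayered (a * b) k := by
  simpa only [mul_one] using ha.mul hab (one b)

theorem mul_le_sum_divisors (hn : n ≠ 0) (h : IsKLayered n k) : k * n ≤ ∑ d ∈ n.divisors, d := by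
  obtain ⟨c, hc⟩ := h
  calc k * n = ∑ _i : Fin k, n := by simp
    _ ≤ ∑ i : Fin k, ∑ d ∈ n.divisors with c d = i, d := sum_le_sum fun i _ => by
        rw [hc i (c n)]
        exact single_le_sum (f := fun d : ℕ => d) (fun _ _ => Nat.zero_le _)
          (mem_filter.2 ⟨Nat.mem_divisors_self n hn, rfl⟩)
    _ = ∑ d ∈ n.divisors, d := sum_fiberwise n.divisors c fun d => d

/-- The divisors outside all the `S i` form the last class. -/
theorem of_pairwise_disjoint (S : Fin k → Finset ℕ) (hS : ∀ i, S i ⊆ n.divisors)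
    (hdisj : Pairwise (Function.onFun Disjoint S))
    (hsum : ∀ i, (k + 1) * ∑ d ∈ S i, d = ∑ d ∈ n.divisors, d) : IsKLayered n (k + 1) := by
  classical
  have eq_of_mem {d : ℕ} {i j : Fin k} (hi : d ∈ S i) (hj : d ∈ S j) : i = j := by
    by_contra hij
    exact disjoint_left.1 (hdisj hij) hi hj
  let c (d : ℕ) : Fin (k + 1) := if h : ∃ i, d ∈ S i then h.choose.castSucc else Fin.last k
  have fiber (i : Fin k) : {d ∈ n.divisors | c d = i.castSucc} = S i := by
    ext d
    by_cases h : ∃ j, d ∈ S j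
    · simp only [mem_filter, c, dif_pos h, Fin.castSucc_inj]
      exact ⟨fun hd => hd.2 ▸ h.choose_spec, fun hd => ⟨hS i hd, eq_of_mem h.choose_spec hd⟩⟩
    · simp only [mem_filter, c, dif_neg h, (Fin.castSucc_ne_last i).symm, and_false, false_iff]
      exact fun hd => h ⟨i, hd⟩
  have total := sum_fiberwise n.divisors c fun d => d
  simp only [Fin.sum_univ_castSucc, fiber] at total
  suffices h : ∀ i, (k + 1) * ∑ d ∈ n.divisors with c d = i, d = ∑ d ∈ n.divisors, d from
    ⟨c, fun i j => Nat.eq_of_mul_eq_mul_left k.succ_pos ((h i).trans (h j).symm)⟩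
  refine Fin.lastCases ?_ fun i => by rw [fiber, hsum]
  have mul_sum_classes : (k + 1) * ∑ i, ∑ d ∈ S i, d = k * ∑ d ∈ n.divisors, d := by
    rw [mul_sum, sum_congr rfl fun i _ => hsum i]
    simp
  have := congrArg ((k + 1) * ·) total
  simp only [mul_add, mul_sum_classes] at this
  linarith

end IsKLayered

/-- The subset sums of `s` cover every integer between `A` and `∑ x ∈ s, x - A`. The condition on
the upper end is written as `t + A ≤ ∑ x ∈ s, x` to avoid truncated subtraction. -/
def SubsetSumsCover (s : Finset ℕ) (A : ℕ) : Prop :=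
  ∀ t, A ≤ t → t + A ≤ ∑ x ∈ s, x → ∃ u ⊆ s, ∑ x ∈ u, x = t

namespace SubsetSumsCover

variable {s T : Finset ℕ} {A g x : ℕ}

theorem insert (hs : SubsetSumsCover s A) (hx : x ∉ s) (hle : x + 2 * A ≤ ∑ y ∈ s, y + 1) :
    SubsetSumsCover (insert x s) A := by
  intro t hAt htA
  rw [sum_insert hx] at htA
  by_cases ht : t + A ≤ ∑ y ∈ s, y
  · obtain ⟨u, hu, rfl⟩ := hs t hAt ht
    exact ⟨u, hu.trans (subset_insert x s), rfl⟩
  · obtain ⟨u, hu, hsum⟩ := hs (t - x) (by lia) (by lia)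
    refine ⟨Insert.insert x u, insert_subset_insert x hu, ?_⟩
    rw [sum_insert fun h => hx (hu h), hsum]
    lia

theorem union (hs : SubsetSumsCover s A) (hd : Disjoint s T)
    (hle : ∀ x ∈ T, x + 2 * A ≤ ∑ y ∈ s, y + ∑ y ∈ T with y < x, y + 1) :
    SubsetSumsCover (s ∪ T) A := by
  induction T using Finset.induction_on_max with
  | empty => simpa only [union_empty] using hs
  | insert x T hmax ih =>
    have hxT : x ∉ T := fun h => (hmax x h).false
    rw [disjoint_insert_right] at hd
    have filter_lt {z : ℕ} (hz : z = x ∨ z < x) :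
        {y ∈ Insert.insert x T | y < z} = {y ∈ T | y < z} := by
      rw [filter_insert, if_neg (by lia)]
    have cover := ih hd.2 fun z hz => by
      rw [← filter_lt (Or.inr (hmax z hz))]
      exact hle z (mem_insert_of_mem hz)
    rw [union_insert]
    refine cover.insert (by simp [hd.1, hxT]) ?_
    have := hle x (mem_insert_self x T)
    rwa [filter_lt (Or.inl rfl), filter_true_of_mem hmax, ← sum_union hd.2] at this

/-- A target `t` is split as `g * v + w` with `v` a subset sum of `T` and `w` one of `s`; the
bounds on `g` make the windows for `w` belonging to consecutive values of `v` overlap. -/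
theorem union_image_mul (hs : SubsetSumsCover s A) (hT : SubsetSumsCover T A) (hg : g ≠ 0)
    (hd : Disjoint s (T.image (g * ·))) (hAT : 2 * A ≤ ∑ x ∈ T, x)
    (hgs : g + 2 * A ≤ ∑ x ∈ s, x + 1) (hgA : g * A + 2 * A ≤ ∑ x ∈ s, x + 1) :
    SubsetSumsCover (s ∪ T.image (g * ·)) A := by
  have sum_image_mul (v : Finset ℕ) : ∑ x ∈ v.image (g * ·), x = g * ∑ x ∈ v, x := by
    rw [sum_image fun _ _ _ _ h => Nat.eq_of_mul_eq_mul_left (Nat.pos_of_ne_zero hg) h, mul_sum]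
  have of_split {t : ℕ} (v : Finset ℕ) (hv : v ⊆ T) (hlo : g * ∑ x ∈ v, x + A ≤ t)
      (hhi : t + A ≤ g * ∑ x ∈ v, x + ∑ x ∈ s, x) :
      ∃ u ⊆ s ∪ T.image (g * ·), ∑ x ∈ u, x = t := by
    obtain ⟨w, hw, hsum⟩ := hs (t - g * ∑ x ∈ v, x) (by lia) (by lia)
    refine ⟨w ∪ v.image (g * ·), union_subset_union hw (image_subset_image hv), ?_⟩
    rw [sum_union (hd.mono hw (image_subset_image hv)), hsum, sum_image_mul]
    lia
  intro t hAt htA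
  rw [sum_union hd, sum_image_mul] at htA
  by_cases hlow : t + A ≤ ∑ x ∈ s, x
  · exact of_split ∅ (empty_subset T) (by simpa using hAt) (by simpa using hlow)
  by_cases hhigh : g * ∑ x ∈ T, x + A ≤ t
  · exact of_split T subset_rfl hhigh (by lia)
  set q := (t - A) / g
  have hq_le : g * q ≤ t - A := Nat.mul_div_le _ _
  have lt_hq : t - A < g * q + g := by
    simpa only [mul_add, mul_one] using Nat.lt_mul_div_succ (t - A) (Nat.pos_of_ne_zero hg)
  obtain ⟨v, hAv, hvA, hlo, hhi⟩ : ∃ v, A ≤ v ∧ v + A ≤ ∑ x ∈ T, x ∧ g * v + A ≤ t ∧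
      t + A ≤ g * v + ∑ x ∈ s, x := by
    rcases lt_or_ge q A with hqA | hAq
    · have := Nat.mul_le_mul_left g hqA
      exact ⟨A, le_rfl, by lia, by lia, by lia⟩
    rcases le_or_gt (q + A) (∑ x ∈ T, x) with hqT | hTq
    · exact ⟨q, hAq, hqT, by lia, by lia⟩
    · have := Nat.mul_le_mul_left g hTq.le
      have mul_sub_add : g * (∑ x ∈ T, x - A) + g * A = g * ∑ x ∈ T, x := by
        rw [← mul_add, Nat.sub_add_cancel (by lia)]
      exact ⟨∑ x ∈ T, x - A, by lia, by lia, by lia, by lia⟩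
  obtain ⟨u, hu, rfl⟩ := hT v hAv hvA
  exact of_split u hu hlo hhi

end SubsetSumsCover

theorem le_sum_divisors (m : ℕ) : m ≤ ∑ d ∈ m.divisors, d := by
  rw [Nat.sum_divisors_eq_sum_properDivisors_add_self]
  exact Nat.le_add_left _ _

theorem sum_divisors_mul_prime {m q : ℕ} (hq : q.Prime) (hqm : ¬ q ∣ m) :
    ∑ d ∈ (m * q).divisors, d = (q + 1) * ∑ d ∈ m.divisors, d := by
  rw [(hq.coprime_iff_not_dvd.2 hqm).symm.sum_divisors_mul, hq.sum_divisors, mul_comm, add_comm q]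

theorem sum_divisors_two_pow (a : ℕ) : ∑ d ∈ (2 ^ a).divisors, d + 1 = 2 ^ (a + 1) := by
  rw [Nat.sum_divisors_prime_pow Nat.prime_two, Nat.geomSum_eq le_rfl, Nat.div_one,
    Nat.sub_add_cancel Nat.one_le_two_pow]

theorem sum_mul_le_sum_of_mul_mem {u : ℕ} (hu : u ≠ 0) {s t : Finset ℕ}
    (h : ∀ d ∈ s, d * u ∈ t) : (∑ d ∈ s, d) * u ≤ ∑ d ∈ t, d := by
  rw [sum_mul, ← sum_image (f := fun d => d) (g := (· * u)) fun _ _ _ _ h =>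
    Nat.eq_of_mul_eq_mul_right (Nat.pos_of_ne_zero hu) h]
  exact sum_le_sum_of_subset (image_subset_iff.2 h)

theorem sum_divisors_mul_le {m u : ℕ} (hm : m ≠ 0) (hu : u ≠ 0) :
    (∑ d ∈ m.divisors, d) * u ≤ ∑ d ∈ (m * u).divisors, d :=
  sum_mul_le_sum_of_mul_mem hu fun _ hd =>
    Nat.mem_divisors.2 ⟨mul_dvd_mul_right (Nat.dvd_of_mem_divisors hd) u, mul_ne_zero hm hu⟩

theorem add_le_sum_divisors_add_sum_sdiff_mul {m n u w r : ℕ} (hm : m ≠ 0) (hn : n ≠ 0)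
    (hu : u ≠ 0)
    (h : w + r ≤ ∑ d ∈ m.divisors, d + ∑ d ∈ n.divisors \ m.divisors with d < w, d) :
    w * u + r ≤ ∑ d ∈ (m * u).divisors, d +
      ∑ d ∈ (n * u).divisors \ (m * u).divisors with d < w * u, d := by
  have hu_pos := Nat.pos_of_ne_zero hu
  have sdiff_le : (∑ d ∈ n.divisors \ m.divisors with d < w, d) * u ≤
      ∑ d ∈ (n * u).divisors \ (m * u).divisors with d < w * u, d :=
    sum_mul_le_sum_of_mul_mem hu fun d hd => by
      simpa [mul_dvd_mul_iff_right hu, hu, hu_pos, hm, hn] using hd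
  calc w * u + r ≤ (w + r) * u := by
        rw [add_mul]
        exact Nat.add_le_add_left (Nat.le_mul_of_pos_right r hu_pos) _
    _ ≤ _ := Nat.mul_le_mul_right u h
    _ ≤ _ := by
        rw [add_mul]
        exact Nat.add_le_add (sum_divisors_mul_le hm hu) sdiff_le

theorem exists_odd_cofactor {v p x : ℕ} (hodd : Odd (v * p)) (hx : x ∣ v * p)
    (hlt : 2 * v < x) : ∃ j, Odd j ∧ 2 * j < p ∧ v * p = x * j := by
  obtain ⟨j, hj⟩ := hx
  have hj_odd : Odd j := (Nat.odd_mul.1 (hj ▸ hodd)).2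
  refine ⟨j, hj_odd, Nat.lt_of_mul_lt_mul_left (a := v) ?_, hj⟩
  calc v * (2 * j) = 2 * v * j := by ring
    _ < x * j := Nat.mul_lt_mul_of_pos_right hlt hj_odd.pos
    _ = v * p := hj.symm

theorem not_isKLayered_of_dvd {m n k : ℕ} (hn : n ≠ 0) (hmn : m ∣ n)
    (hlt : ∑ d ∈ n.divisors, d < k * n) : ¬ IsKLayered m k := by
  intro h
  obtain ⟨u, rfl⟩ := hmn
  obtain ⟨hm, hu⟩ := mul_ne_zero_iff.1 hn
  have := Nat.mul_le_mul_right u (h.mul_le_sum_divisors hm)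
  have := sum_divisors_mul_le hm hu
  lia

namespace SubsetSumsCover

variable {m q u A : ℕ}

theorem divisors_mul_prime (hm : SubsetSumsCover m.divisors A) (hq : q.Prime) (hqm : ¬ q ∣ m)
    (hA : 2 * A ≤ ∑ d ∈ m.divisors, d) (hle : q + 2 * A ≤ ∑ d ∈ m.divisors, d + 1)
    (hleA : q * A + 2 * A ≤ ∑ d ∈ m.divisors, d + 1) : SubsetSumsCover (m * q).divisors A := by
  have divisors_eq : (m * q).divisors = m.divisors ∪ m.divisors.image (q * ·) := by
    rw [mul_comm m q, Nat.divisors_mul, hq.divisors]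
    ext d
    simp only [mem_mul, mem_insert, mem_singleton, exists_eq_or_imp, exists_eq_left, one_mul,
      exists_eq_right, mem_union, mem_image]
  rw [divisors_eq]
  refine hm.union_image_mul hm hq.ne_zero ?_ hA hle hleA
  rw [disjoint_left]
  rintro _ hd he
  obtain ⟨e, -, rfl⟩ := mem_image.1 he
  exact hqm ((dvd_mul_right q e).trans (Nat.dvd_of_mem_divisors hd))

theorem isKLayered_two (hm : SubsetSumsCover m.divisors A) (heven : Even (∑ d ∈ m.divisors, d))
    (hA : 2 * A ≤ ∑ d ∈ m.divisors, d) : IsKLayered m 2 := by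
  obtain ⟨h, hh⟩ := heven
  obtain ⟨u, hu, hsum⟩ := hm h (by lia) (by lia)
  exact .of_pairwise_disjoint (fun _ : Fin 1 => u) (fun _ => hu) Subsingleton.pairwise
    fun _ => by rw [hsum, hh]; ring

theorem divisors_two_pow (a : ℕ) : SubsetSumsCover (2 ^ a).divisors 0 := by
  induction a with
  | zero =>
    intro t _ ht
    rcases Nat.le_one_iff_eq_zero_or_eq_one.1 (show t ≤ 1 by simpa using ht) with rfl | rfl
    exacts [⟨∅, by simp⟩, ⟨{1}, by simp⟩]
  | succ a ih =>
    have divisors_succ : (2 ^ (a + 1)).divisors = Insert.insert (2 ^ (a + 1)) (2 ^ a).divisors := by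
      simp only [Nat.divisors_prime_pow Nat.prime_two, range_add_one, map_insert]
      rfl
    rw [divisors_succ]
    refine ih.insert (fun h => ?_) (sum_divisors_two_pow a).ge
    exact (Nat.pow_lt_pow_right one_lt_two a.lt_succ_self).not_ge (Nat.divisor_le h)

theorem divisors_945 : SubsetSumsCover (Nat.divisors 945) 3 := by
  have divisors_eq : Nat.divisors 945 =
      {1, 3, 5, 7} ∪ {9, 15, 21, 27, 35, 45, 63, 105, 135, 189, 315, 945} := by decide +kernel
  have base : SubsetSumsCover {1, 3, 5, 7} 3 := by
    have cover : ∀ t ∈ Icc 3 13, ∃ u ∈ ({1, 3, 5, 7} : Finset ℕ).powerset, ∑ x ∈ u, x = t := by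
      decide
    intro t hlo hhi
    have sum_eq : ∑ x ∈ ({1, 3, 5, 7} : Finset ℕ), x = 16 := by decide
    simpa only [mem_powerset] using cover t (mem_Icc.2 ⟨hlo, by lia⟩)
  rw [divisors_eq]
  exact base.union (by decide) (by decide)

/-- A divisor of `945 * u * p` is `945 * u * p / j` with `j` odd. It is at most `2 * (945 * u)`,
hence below `σ (945 * u)`, unless `j = 1`, or `j = 3` and `p = 7`; those two are reached with the
help of the divisors that `945 * p` has and `945` has not, scaled by `u`. -/
theorem divisors_945_mul_mul (hu : Odd u) {p : ℕ} (hp : p ∈ ({3, 5, 7} : Finset ℕ))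
    (h : SubsetSumsCover (945 * u).divisors 3) : SubsetSumsCover (945 * u * p).divisors 3 := by
  have hp_cases : p = 3 ∨ p = 5 ∨ p = 7 := by simpa using hp
  have hp_odd : Odd p := by fin_cases hp <;> decide
  have hp0 : p ≠ 0 := hp_odd.pos.ne'
  have hu0 : u ≠ 0 := hu.pos.ne'
  have sum_945 : ∑ d ∈ Nat.divisors 945, d = 1920 := by decide +kernel
  have sum_ge : 1920 * u ≤ ∑ d ∈ (945 * u).divisors, d :=
    sum_945 ▸ sum_divisors_mul_le (by norm_num) hu0
  have odd_mul : Odd (945 * u * p) := Nat.odd_mul.2 ⟨Nat.odd_mul.2 ⟨by decide, hu⟩, hp_odd⟩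
  rw [← union_sdiff_of_subset (Nat.divisors_subset_of_dvd odd_mul.pos.ne'
    (dvd_mul_right (945 * u) p))]
  refine h.union disjoint_sdiff fun x hx => ?_
  have hx_dvd := Nat.dvd_of_mem_divisors (mem_sdiff.1 hx).1
  by_cases hx_le : x ≤ 2 * (945 * u)
  · have := hu.pos
    lia
  obtain ⟨j, ⟨i, rfl⟩, hj_lt, hj⟩ := exists_odd_cofactor odd_mul hx_dvd (not_le.1 hx_le)
  obtain ⟨w, rfl, hw⟩ : ∃ w, x = w * u ∧ w + 5 ≤ ∑ d ∈ Nat.divisors 945, d +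
      ∑ d ∈ (945 * p).divisors \ Nat.divisors 945 with d < w, d := by
    rw [sum_945]
    obtain rfl | ⟨rfl, rfl⟩ : i = 0 ∨ p = 7 ∧ i = 1 := by lia
    · exact ⟨945 * p, by lia, by fin_cases hp <;> decide +kernel⟩
    · exact ⟨2205, by lia, by decide +kernel⟩
  have := add_le_sum_divisors_add_sum_sdiff_mul (by norm_num) (by positivity) hu0 hw
  rw [mul_right_comm 945 p u] at this
  lia

theorem divisors_945_mul (hu : u ≠ 0) (hprimes : u.primeFactors ⊆ {3, 5, 7}) :
    SubsetSumsCover (945 * u).divisors 3 := by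
  induction u using induction_on_primes with
  | zero => contradiction
  | one => exact divisors_945
  | prime_mul p u hp ih =>
    have hu0 : u ≠ 0 := right_ne_zero_of_mul hu
    rw [Nat.primeFactors_mul hp.ne_zero hu0, hp.primeFactors] at hprimes
    obtain ⟨hp_mem, hu_primes⟩ := union_subset_iff.1 hprimes
    have hu_odd : Odd u := Nat.not_even_iff_odd.1 fun h =>
      absurd (hu_primes (Nat.mem_primeFactors.2 ⟨Nat.prime_two, h.two_dvd, hu0⟩)) (by decide)
    rw [mul_comm p, ← mul_assoc]
    exact (ih hu0 hu_primes).divisors_945_mul_mul hu_odd (singleton_subset_iff.1 hp_mem)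

end SubsetSumsCover

section RamanujanPrime

open Nat (centralBinom primesLE)

theorem pow_factorization_centralBinom_le {n p : ℕ} (hn : 2 < n) (hp : p.Prime) :
    p ^ (centralBinom n).factorization p ≤
      (if p ≤ (2 * n).sqrt ∨ n < p then 2 * n else 1) * if p ≤ 2 * n / 3 then p else 1 := by
  have one_le_right : 1 ≤ if p ≤ 2 * n / 3 then p else 1 := by
    split_ifs
    exacts [hp.one_le, le_rfl]
  by_cases hextreme : p ≤ (2 * n).sqrt ∨ n < p
  · rw [if_pos hextreme]
    exact (Nat.pow_factorization_choose_le (by lia)).trans (Nat.le_mul_of_pos_right _ one_le_right)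
  rw [if_neg hextreme, one_mul]
  rw [not_or, not_le, Nat.sqrt_lt', not_lt] at hextreme
  by_cases hp_le : p ≤ 2 * n / 3
  · rw [if_pos hp_le]
    exact (Nat.pow_le_pow_right hp.pos
      (Nat.factorization_choose_le_one hextreme.1)).trans_eq (pow_one p)
  · rwa [Nat.factorization_centralBinom_of_two_mul_self_lt_three_mul hn hextreme.2 (by lia),
      pow_zero]

theorem centralBinom_le_pow_card_primes_mul {n : ℕ} (hn : 2 < n) :
    centralBinom n ≤
      (2 * n) ^ (#(primesLE (2 * n).sqrt) + #{p ∈ Ioc n (2 * n) | p.Prime}) * 4 ^ (2 * n / 3) :=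
  calc centralBinom n = ∏ p ∈ primesLE (2 * n), p ^ (centralBinom n).factorization p := by
        rw [Nat.primesLE_eq_filter_range, prod_filter_of_ne, n.prod_pow_factorization_centralBinom]
        intro p _ hne
        contrapose! hne
        rw [Nat.factorization_eq_zero_of_not_prime _ hne, pow_zero]
    _ ≤ (∏ p ∈ primesLE (2 * n) with p ≤ (2 * n).sqrt ∨ n < p, 2 * n) *
        ∏ p ∈ primesLE (2 * n) with p ≤ 2 * n / 3, p := by
      rw [prod_filter, prod_filter, ← prod_mul_distrib]
      exact prod_le_prod' fun p hp =>
        pow_factorization_centralBinom_le hn (Nat.prime_of_mem_primesLE hp)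
    _ ≤ (2 * n) ^ #(primesLE (2 * n).sqrt ∪ {p ∈ Ioc n (2 * n) | p.Prime}) *
        primorial (2 * n / 3) := by
      rw [prod_const, primorial_eq_prod_primesLE]
      refine Nat.mul_le_mul (Nat.pow_le_pow_right (by lia) (card_le_card fun p hp => ?_))
        (prod_le_prod_of_subset_of_one_le' (fun p hp => ?_)
          fun p hp _ => (Nat.prime_of_mem_primesLE hp).one_le)
      all_goals grind [Nat.mem_primesLE]
    _ ≤ _ := Nat.mul_le_mul (Nat.pow_le_pow_right (by lia) (card_union_le _ _))
      (primorial_le_four_pow _)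

/-- Bertrand's inequality leaves room for one factor `2 * n`: since `1` is not prime, at most
`√(2 * n) - 1` primes are at most `√(2 * n)`. -/
theorem one_lt_card_primes_Ioc {n : ℕ} (hn : 512 ≤ n) :
    1 < #{p ∈ Ioc n (2 * n) | p.Prime} := by
  by_contra! hcard
  have card_le : #(primesLE (2 * n).sqrt) + #{p ∈ Ioc n (2 * n) | p.Prime} ≤ (2 * n).sqrt := by
    have : primesLE (2 * n).sqrt ⊆ Ioc 1 (2 * n).sqrt := fun p hp =>
      mem_Ioc.2 ⟨Nat.one_lt_of_mem_primesLE hp, Nat.le_of_mem_primesLE hp⟩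
    have sqrt_pos : 0 < (2 * n).sqrt := Nat.sqrt_pos.2 (by lia)
    grw [card_le_card this, hcard, Nat.card_Ioc]
    lia
  have upper : n * centralBinom n ≤ 4 ^ n := by
    grw [centralBinom_le_pow_card_primes_mul (by lia), card_le, ← mul_assoc,
      bertrand_main_inequality hn]
    lia
  exact (Nat.four_pow_lt_mul_centralBinom n (by lia)).not_ge upper

theorem exists_two_primes_Ioc_half {n : ℕ} (hn : 11 ≤ n) :
    ∃ q p : ℕ, q.Prime ∧ p.Prime ∧ q < p ∧ p ≤ n ∧ n < 2 * q := by
  by_cases hlarge : 1024 ≤ n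
  · obtain ⟨q, hq, p, hp, hne⟩ := one_lt_card.1 (one_lt_card_primes_Ioc (n := n / 2) (by lia))
    simp only [mem_filter, mem_Ioc] at hq hp
    rcases hne.lt_or_gt with h | h
    · exact ⟨q, p, hq.2, hp.2, h, by lia, by lia⟩
    · exact ⟨p, q, hp.2, hq.2, h, by lia, by lia⟩
  have of_window (q p : ℕ) (h : (q.Prime ∧ p.Prime ∧ q < p) ∧ p ≤ n ∧ n < 2 * q) :
      ∃ q p : ℕ, q.Prime ∧ p.Prime ∧ q < p ∧ p ≤ n ∧ n < 2 * q :=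
    ⟨q, p, h.1.1, h.1.2.1, h.1.2.2, h.2⟩
  rcases lt_or_ge n 14 with h | h
  · exact of_window 7 11 ⟨by norm_num, by lia⟩
  rcases lt_or_ge n 22 with h | h
  · exact of_window 11 13 ⟨by norm_num, by lia⟩
  rcases lt_or_ge n 34 with h | h
  · exact of_window 17 19 ⟨by norm_num, by lia⟩
  rcases lt_or_ge n 58 with h | h
  · exact of_window 29 31 ⟨by norm_num, by lia⟩
  rcases lt_or_ge n 94 with h | h
  · exact of_window 47 53 ⟨by norm_num, by lia⟩
  rcases lt_or_ge n 166 with h | h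
  · exact of_window 83 89 ⟨by norm_num, by lia⟩
  rcases lt_or_ge n 314 with h | h
  · exact of_window 157 163 ⟨by norm_num, by lia⟩
  rcases lt_or_ge n 622 with h | h
  · exact of_window 311 313 ⟨by norm_num, by lia⟩
  · exact of_window 617 619 ⟨by norm_num, by lia⟩

end RamanujanPrime

/-- The part of `n` supported on the primes in `s`, that is, the product of the full powers of
those primes that divide `n`. -/
def primePart (s : Finset ℕ) (n : ℕ) : ℕ :=
  ∏ p ∈ s, p ^ n.factorization p

section primePart

variable {s t : Finset ℕ} {n q : ℕ}

theorem coprime_primePart (hs : ∀ p ∈ s, p.Prime) (ht : ∀ p ∈ t, p.Prime) (hst : Disjoint s t) :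
    (primePart s n).Coprime (primePart t n) :=
  Nat.coprime_prod_left_iff.2 fun p hp => Nat.coprime_prod_right_iff.2 fun r hr =>
    Nat.coprime_pow_primes _ _ (hs p hp) (ht r hr) (disjoint_iff_ne.1 hst p hp r hr)

theorem primePart_mul_primePart_sdiff (hn : n ≠ 0) (hs : s ⊆ n.primeFactors) :
    primePart s n * primePart (n.primeFactors \ s) n = n := by
  rw [primePart, primePart, mul_comm, prod_sdiff hs]
  exact Nat.prod_factorization_pow_eq_self hn

theorem primePart_eq_primePart_erase_mul (hq : q ∈ s) (hqn : n.factorization q = 1) :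
    primePart s n = primePart (s.erase q) n * q := by
  rw [primePart, ← prod_erase_mul s _ hq, hqn, pow_one, primePart]

theorem primePart_ne_zero (hs : ∀ p ∈ s, p.Prime) : primePart s n ≠ 0 :=
  prod_ne_zero_iff.2 fun p hp => pow_ne_zero _ (hs p hp).ne_zero

theorem not_dvd_primePart (hs : ∀ p ∈ s, p.Prime) (hq : q.Prime) (hqs : q ∉ s) :
    ¬ q ∣ primePart s n := by
  rw [primePart, hq.prime.dvd_finsetProd_iff]
  rintro ⟨p, hp, hdvd⟩
  exact hqs ((Nat.prime_dvd_prime_iff_eq hq (hs p hp)).1 (hq.dvd_of_dvd_pow hdvd) ▸ hp)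

theorem dvd_primePart {m : ℕ} (hn : n ≠ 0) (hmn : m ∣ n) (hms : m.primeFactors ⊆ s) :
    m ∣ primePart s n := by
  conv_lhs => rw [← Nat.prod_factorization_pow_eq_self (ne_zero_of_dvd_ne_zero hn hmn)]
  refine (prod_dvd_prod_of_dvd _ _ fun p _ => pow_dvd_pow p ?_).trans
    (prod_dvd_prod_of_subset _ _ _ hms)
  exact Nat.factorization_le_factorization_of_dvd_right hmn (ne_zero_of_dvd_ne_zero hn hmn) hn

/-- The factor `q + 1` that `q` contributes makes the sum of divisors even. -/
theorem even_sum_divisors_primePart (hs : ∀ p ∈ s, p.Prime) (hq : q ∈ s) (hq2 : q ≠ 2)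
    (hqn : n.factorization q = 1) : Even (∑ d ∈ (primePart s n).divisors, d) := by
  rw [primePart_eq_primePart_erase_mul hq hqn, sum_divisors_mul_prime (hs q hq)
    (not_dvd_primePart (fun p hp => hs p (mem_of_mem_erase hp)) (hs q hq) (notMem_erase q s))]
  exact ((hs q hq).odd_of_ne_two hq2).add_one.mul_right _

theorem isKLayered_four_of_primePart (hn : n ≠ 0) (hs : s ⊆ n.primeFactors)
    (ht : t ⊆ n.primeFactors) (hst : Disjoint s t) (hs2 : IsKLayered (primePart s n) 2)
    (ht2 : IsKLayered (primePart t n) 2) : IsKLayered n 4 := by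
  have prime_of_mem {p : ℕ} (hp : p ∈ s ∪ t) : p.Prime :=
    Nat.prime_of_mem_primeFactors (union_subset hs ht hp)
  have coprime : (primePart s n).Coprime (primePart t n) := coprime_primePart
    (fun p hp => prime_of_mem (mem_union_left t hp))
    (fun p hp => prime_of_mem (mem_union_right s hp)) hst
  rw [← primePart_mul_primePart_sdiff hn (union_subset hs ht)]
  refine IsKLayered.mul_right (coprime_primePart (fun p => prime_of_mem)
    (fun p hp => Nat.prime_of_mem_primeFactors (mem_sdiff.1 hp).1) disjoint_sdiff) ?_
  rw [primePart, prod_union hst]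
  exact hs2.mul coprime ht2

end primePart

section Factorial

variable {n p q : ℕ}

theorem factorization_factorial_eq_one (hp : p.Prime) (hp2 : p ≠ 2) (hpn : p ≤ n)
    (hnp : n < 2 * p) : n.factorial.factorization p = 1 := by
  have two_lt := hp.two_le.lt_of_ne' hp2
  rw [Nat.factorization_factorial hp (b := 2) (Nat.log_lt_of_lt_pow (by lia) (by nlinarith))]
  simpa using Nat.div_eq_of_lt_le (by lia) (by lia)

variable (n) in
theorem lt_pow_factorization_factorial_succ (hp : p.Prime) :
    n < p ^ (n.factorial.factorization p + 1) := by
  rcases eq_or_ne n 0 with rfl | hn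
  · exact pow_pos hp.pos _
  have log_le : Nat.log p n ≤ n.factorial.factorization p :=
    (hp.pow_dvd_iff_le_factorization n.factorial_ne_zero).1
      (Nat.dvd_factorial (pow_pos hp.pos _) (Nat.pow_log_le_self p hn))
  exact (Nat.lt_pow_succ_log_self hp.one_lt n).trans_le
    (Nat.pow_le_pow_right hp.pos (Nat.succ_le_succ log_le))

theorem subsetSumsCover_primePart_two_factorial (hp : p.Prime) (hp2 : p ≠ 2) (hpn : p ≤ n)
    (hnp : n < 2 * p) : SubsetSumsCover (primePart {2, p} n.factorial).divisors 0 := by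
  rw [primePart, prod_pair hp2.symm, factorization_factorial_eq_one hp hp2 hpn hnp, pow_one]
  have hndvd : ¬ p ∣ 2 ^ n.factorial.factorization 2 := fun h =>
    hp2 ((Nat.prime_dvd_prime_iff_eq hp Nat.prime_two).1 (hp.dvd_of_dvd_pow h))
  have := lt_pow_factorization_factorial_succ n Nat.prime_two
  have := sum_divisors_two_pow (n.factorial.factorization 2)
  exact (SubsetSumsCover.divisors_two_pow _).divisors_mul_prime hp hndvd (by lia) (by lia) (by lia)

theorem subsetSumsCover_primePart_three_five_seven (hn : n ≠ 0) (hdvd : 945 ∣ n) :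
    SubsetSumsCover (primePart {3, 5, 7} n).divisors 3 := by
  obtain ⟨u, hu⟩ := dvd_primePart (s := {3, 5, 7}) hn hdvd (by decide +kernel)
  rw [hu]
  refine .divisors_945_mul (right_ne_zero_of_mul (hu ▸ primePart_ne_zero (by decide)))
    fun p hp => ?_
  by_contra hp_mem
  exact not_dvd_primePart (by decide) (Nat.prime_of_mem_primeFactors hp) hp_mem
    (hu ▸ (Nat.dvd_of_mem_primeFactors hp).mul_left 945)

theorem dvd_factorial_945 (hn : 9 ≤ n) : 945 ∣ n.factorial :=
  (by decide +kernel : 945 ∣ Nat.factorial 9).trans (Nat.factorial_dvd_factorial hn)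

theorem subsetSumsCover_primePart_insert_factorial (hn : 9 ≤ n) (hq : q.Prime) (hq2 : q ≠ 2)
    (hqn : q ≤ n) (hnq : n < 2 * q) :
    SubsetSumsCover (primePart (insert q {3, 5, 7}) n.factorial).divisors 3 := by
  have cover := subsetSumsCover_primePart_three_five_seven n.factorial_ne_zero
    (dvd_factorial_945 hn)
  by_cases hq_mem : q ∈ ({3, 5, 7} : Finset ℕ)
  · rwa [insert_eq_of_mem hq_mem]
  have m_dvd : 35 * 3 ^ n.factorial.factorization 3 ∣ primePart {3, 5, 7} n.factorial := by
    rw [primePart, prod_insert (by decide), mul_comm]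
    refine mul_dvd_mul_left _ (dvd_primePart n.factorial_ne_zero ?_ (by decide +kernel))
    exact (by decide : 35 ∣ 945).trans (dvd_factorial_945 hn)
  have m_ge := Nat.le_of_dvd (Nat.pos_of_ne_zero (primePart_ne_zero (by decide))) m_dvd
  have le_sum := le_sum_divisors (primePart {3, 5, 7} n.factorial)
  have lt_three_pow := lt_pow_factorization_factorial_succ n Nat.prime_three
  have := Nat.one_le_pow (n.factorial.factorization 3) 3 (by norm_num)
  rw [pow_succ] at lt_three_pow
  rw [primePart, prod_insert hq_mem, factorization_factorial_eq_one hq hq2 hqn hnq, pow_one,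
    mul_comm]
  exact cover.divisors_mul_prime hq (not_dvd_primePart (by decide) hq hq_mem) (by lia) (by lia)
    (by lia)

theorem isKLayered_two_primePart_two_factorial (hp : p.Prime) (hp2 : p ≠ 2) (hpn : p ≤ n)
    (hnp : n < 2 * p) : IsKLayered (primePart {2, p} n.factorial) 2 :=
  (subsetSumsCover_primePart_two_factorial hp hp2 hpn hnp).isKLayered_two
    (even_sum_divisors_primePart (by simp [hp, Nat.prime_two]) (by simp) hp2
      (factorization_factorial_eq_one hp hp2 hpn hnp)) (by simp)

theorem isKLayered_two_primePart_insert_factorial (hn : 9 ≤ n) (hq : q.Prime) (hq2 : q ≠ 2)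
    (hqn : q ≤ n) (hnq : n < 2 * q) :
    IsKLayered (primePart (insert q {3, 5, 7}) n.factorial) 2 := by
  have primes : ∀ r ∈ (insert q {3, 5, 7} : Finset ℕ), r.Prime :=
    forall_mem_insert .. |>.2 ⟨hq, by decide⟩
  have m_dvd : 945 ∣ primePart (insert q {3, 5, 7}) n.factorial :=
    dvd_primePart n.factorial_ne_zero (dvd_factorial_945 hn)
      (.trans (by decide +kernel) (subset_insert q {3, 5, 7}))
  have m_ge := Nat.le_of_dvd (Nat.pos_of_ne_zero (primePart_ne_zero primes)) m_dvd
  refine (subsetSumsCover_primePart_insert_factorial hn hq hq2 hqn hnq).isKLayered_two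
    (even_sum_divisors_primePart primes (mem_insert_self q _) hq2
      (factorization_factorial_eq_one hq hq2 hqn hnq)) ?_
  exact le_trans (by lia) (le_sum_divisors _)

theorem isKLayered_four_factorial (hn : 11 ≤ n) : IsKLayered n.factorial 4 := by
  obtain ⟨q, p, hq, hp, hqp, hpn, hnq⟩ := exists_two_primes_Ioc_half hn
  have hq6 : q ≠ 6 := by rintro rfl; exact absurd hq (by decide)
  have mem_primeFactors {r : ℕ} (hr : r.Prime) (hrn : r ≤ n) : r ∈ n.factorial.primeFactors :=
    Nat.mem_primeFactors.2 ⟨hr, hr.dvd_factorial.2 hrn, n.factorial_ne_zero⟩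
  refine isKLayered_four_of_primePart n.factorial_ne_zero ?_ ?_ ?_
    (isKLayered_two_primePart_two_factorial hp (by lia) hpn (by lia))
    (isKLayered_two_primePart_insert_factorial (by lia) hq (by lia) (by lia) hnq)
  · simp only [insert_subset_iff, singleton_subset_iff]
    exact ⟨mem_primeFactors Nat.prime_two (by lia), mem_primeFactors hp hpn⟩
  · simp only [insert_subset_iff, singleton_subset_iff]
    exact ⟨mem_primeFactors hq (by lia), mem_primeFactors Nat.prime_three (by lia),
      mem_primeFactors Nat.prime_five (by lia), mem_primeFactors (by norm_num) (by lia)⟩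
  · simp only [disjoint_insert_left, disjoint_singleton_left, mem_insert, mem_singleton]
    lia

theorem isKLayered_four_factorial_nine : IsKLayered (Nat.factorial 9) 4 := by
  have sum_divisors : ∑ d ∈ (Nat.factorial 9).divisors, d = 1481040 := by
    rw [show Nat.factorial 9 = 128 * 2835 from rfl, Nat.Coprime.sum_divisors_mul (by norm_num)]
    decide +kernel
  refine .of_pairwise_disjoint
    ![{362880, 6720, 648, 12}, {181440, 120960, 60480, 6480, 896, 4},
      {90720, 72576, 51840, 45360, 40320, 36288, 30240, 2880, 36}] (fun i d hd => ?_) ?_ ?_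
  · revert i d
    simp only [Nat.mem_divisors]
    decide +kernel
  · rw [Pairwise]
    decide
  · rw [sum_divisors]
    decide

theorem isKLayered_four_factorial_ten : IsKLayered (Nat.factorial 10) 4 := by
  have sum_divisors : ∑ d ∈ (Nat.factorial 10).divisors, d = 15334088 := by
    rw [show Nat.factorial 10 = 256 * 14175 from rfl, Nat.Coprime.sum_divisors_mul (by norm_num)]
    decide +kernel
  refine .of_pairwise_disjoint
    ![{3628800, 201600, 3024, 90, 8}, {1814400, 907200, 725760, 362880, 22400, 864, 18},
      {1209600, 604800, 518400, 453600, 403200, 302400, 259200, 80640, 1680, 2}]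
    (fun i d hd => ?_) ?_ ?_
  · revert i d
    simp only [Nat.mem_divisors]
    decide +kernel
  · rw [Pairwise]
    decide
  · rw [sum_divisors]
    decide

theorem not_isKLayered_four_factorial (hn : n ≤ 8) : ¬ IsKLayered n.factorial 4 := by
  refine not_isKLayered_of_dvd (Nat.factorial_ne_zero 8) (Nat.factorial_dvd_factorial hn) ?_
  rw [show Nat.factorial 8 = 128 * 315 from rfl, Nat.Coprime.sum_divisors_mul (by norm_num)]
  decide +kernel

end Factorial

/-- For a positive integer `n`, the number `n!` is `4`-layered if and only if `n ≥ 9`. -/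
theorem factorial_four_layered_iff (n : ℕ) (hn : 0 < n) :
    IsKLayered (n.factorial) 4 ↔ 9 ≤ n := by
  refine ⟨fun h => ?_, fun h => ?_⟩
  · by_contra! hlt
    exact not_isKLayered_four_factorial (by lia) h
  · obtain rfl | rfl | h11 : n = 9 ∨ n = 10 ∨ 11 ≤ n := by lia
    · exact isKLayered_four_factorial_nine
    · exact isKLayered_four_factorial_ten
    · exact isKLayered_four_factorial h11
end

section
/- Let n and m be positive integers with gcd(n, m) = 1. If n is k-layered and σ(m)/(k+1) can be written as the sum of a subset of the set of positive divisors of m, then n·m is (k+1)-layered. -/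
/-!
Since `n` and `m` are coprime, every divisor of `n * m` is uniquely `a * b` with `a ∣ n` and
`b ∣ m`. The products with `b ∈ A` form a new layer, of sum `σ(n) * S(A)`. The divisors of `m`
outside `A` have sum `σ(m) - S(A) = k * S(A)`, so if each of the remaining products
inherits the layer of its factor `a`, each of these `k` layers has sum
`(σ(n) / k) * (k * S(A)) = σ(n) * S(A)` as well.
-/

theorem card_nsmul_sum_fiber_of_sum_fiber_eq {ι κ M : Type*} [Fintype κ] [DecidableEq κ]
    [AddCommMonoid M] {s : Finset ι} {c : ι → κ} {f : ι → M}
    (h : ∀ i j, ∑ x ∈ s with c x = i, f x = ∑ x ∈ s with c x = j, f x) (i : κ) :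
    Fintype.card κ • ∑ x ∈ s with c x = i, f x = ∑ x ∈ s, f x :=
  calc
    Fintype.card κ • ∑ x ∈ s with c x = i, f x = ∑ _j : κ, ∑ x ∈ s with c x = i, f x := by
      rw [Finset.sum_const, Finset.card_univ]
    _ = ∑ j, ∑ x ∈ s with c x = j, f x := Finset.sum_congr rfl fun j _ => h i j
    _ = ∑ x ∈ s, f x := Finset.sum_fiberwise s c f

theorem IsKLayered.exists_mul_sum_eq_sum_divisors {n k : ℕ} (h : IsKLayered n k) :
    ∃ c : ℕ → Fin k, ∀ i, k * ∑ d ∈ n.divisors with c d = i, d = ∑ d ∈ n.divisors, d := by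
  obtain ⟨c, hc⟩ := h
  exact ⟨c, fun i => by simpa using card_nsmul_sum_fiber_of_sum_fiber_eq hc i⟩

theorem sum_filter_notMem_eq_mul_sum {ι R : Type*} [DecidableEq ι] [NonAssocSemiring R]
    [IsLeftCancelAdd R] {s t : Finset ι} {f : ι → R} {r : R} (hts : t ⊆ s)
    (h : (r + 1) * ∑ x ∈ t, f x = ∑ x ∈ s, f x) :
    ∑ x ∈ s with x ∉ t, f x = r * ∑ x ∈ t, f x := by
  apply add_left_cancel (a := ∑ x ∈ t, f x)
  calc
    ∑ x ∈ t, f x + ∑ x ∈ s with x ∉ t, f x = ∑ x ∈ s, f x := by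
      rw [Finset.filter_notMem_eq_sdiff, add_comm, Finset.sum_sdiff hts]
    _ = ∑ x ∈ t, f x + r * ∑ x ∈ t, f x := by rw [← h, add_one_mul, add_comm]

section CoprimeProduct

variable {n m : ℕ}

theorem sum_divisors_mul_of_coprime {M : Type*} [AddCommMonoid M] (hcop : n.Coprime m)
    (f : ℕ → M) :
    ∑ d ∈ (n * m).divisors, f d = ∑ a ∈ n.divisors, ∑ b ∈ m.divisors, f (a * b) := by
  rw [Nat.divisors_mul, Finset.mul_def, Finset.sum_image hcop.mul_injOn_divisors,
    Finset.sum_product]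

theorem sum_divisors_mul_filter_gcd_s16 {R : Type*} [Semiring R] {f : ArithmeticFunction R}
    (hf : f.IsMultiplicative) (hcop : n.Coprime m) (p q : ℕ → Prop) [DecidablePred p]
    [DecidablePred q] :
    ∑ d ∈ (n * m).divisors with p (d.gcd n) ∧ q (d.gcd m), f d =
      (∑ a ∈ n.divisors with p a, f a) * ∑ b ∈ m.divisors with q b, f b := by
  rw [Finset.sum_filter, sum_divisors_mul_of_coprime hcop, Finset.sum_filter, Finset.sum_filter,
    Finset.sum_mul_sum]
  refine Finset.sum_congr rfl fun a ha => Finset.sum_congr rfl fun b hb => ?_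
  have han : a ∣ n := Nat.dvd_of_mem_divisors ha
  have hbm : b ∣ m := Nat.dvd_of_mem_divisors hb
  have hgcdn : (a * b).gcd n = a := by
    rw [mul_comm, Nat.gcd_mul_of_coprime_of_dvd (hcop.symm.coprime_dvd_left hbm) han]
  have hgcdm : (a * b).gcd m = b :=
    Nat.gcd_mul_of_coprime_of_dvd (hcop.coprime_dvd_left han) hbm
  rw [hgcdn, hgcdm, ite_zero_mul_ite_zero, hf.map_mul_of_coprime (hcop.of_dvd han hbm)]

end CoprimeProduct

/-- The coloring of the divisors `d = a * b` of `n * m`, with `a = d.gcd n` and `b = d.gcd m`,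
that extends a coloring `c` of the divisors of `n`: the new color `Fin.last k` if `b ∈ A`, and
the color of `a` otherwise. -/
def extendColoring {k : ℕ} (n m : ℕ) (A : Finset ℕ) (c : ℕ → Fin k) (d : ℕ) : Fin (k + 1) :=
  if d.gcd m ∈ A then Fin.last k else (c (d.gcd n)).castSucc

section ExtendColoring

variable {n m k : ℕ} {A : Finset ℕ} {c : ℕ → Fin k}

theorem extendColoring_eq_last_iff {d : ℕ} :
    extendColoring n m A c d = Fin.last k ↔ d.gcd m ∈ A := by
  simp [extendColoring, Fin.castSucc_ne_last]

theorem extendColoring_eq_castSucc_iff {d : ℕ} {i : Fin k} :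
    extendColoring n m A c d = i.castSucc ↔ c (d.gcd n) = i ∧ d.gcd m ∉ A := by
  by_cases hA : d.gcd m ∈ A <;> simp [extendColoring, hA, (Fin.castSucc_ne_last i).symm]

theorem sum_extendColoring_eq_last (hcop : n.Coprime m) (hA : A ⊆ m.divisors) :
    ∑ d ∈ (n * m).divisors with extendColoring n m A c d = Fin.last k, d =
      (∑ a ∈ n.divisors, a) * ∑ b ∈ A, b := by
  simpa [extendColoring_eq_last_iff, Finset.filter_mem_eq_inter, Finset.inter_eq_right.2 hA]
    using sum_divisors_mul_filter_gcd_s16 ArithmeticFunction.isMultiplicative_id hcop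
      (fun _ => True) (· ∈ A)

theorem sum_extendColoring_eq_castSucc (hcop : n.Coprime m) (i : Fin k) :
    ∑ d ∈ (n * m).divisors with extendColoring n m A c d = i.castSucc, d =
      (∑ a ∈ n.divisors with c a = i, a) * ∑ b ∈ m.divisors with b ∉ A, b := by
  simpa only [extendColoring_eq_castSucc_iff, ArithmeticFunction.id_apply]
    using sum_divisors_mul_filter_gcd_s16 ArithmeticFunction.isMultiplicative_id hcop (c · = i) (· ∉ A)

end ExtendColoring

/-- Let `n` and `m` be coprime positive integers. If `n` is `k`-layered and
`σ(m) / (k + 1)` is the sum of a subset of the set of positive divisors of `m`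
(expressed as `(k + 1) * S(A) = σ(m)`), then `n * m` is `(k + 1)`-layered. -/
theorem layered_succ_of_subset_sum (n m k : ℕ) (hn : 0 < n) (hm : 0 < m)
    (hcop : Nat.Coprime n m) (h : IsKLayered n k)
    (hA : ∃ A ⊆ m.divisors, (k + 1) * ∑ d ∈ A, d = ∑ d ∈ m.divisors, d) :
    IsKLayered (n * m) (k + 1) := by
  obtain ⟨c, hc⟩ := h.exists_mul_sum_eq_sum_divisors
  obtain ⟨A, hAm, hAσ⟩ := hA
  have layer_sum (i : Fin (k + 1)) :
      ∑ d ∈ (n * m).divisors with extendColoring n m A c d = i, d =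
        (∑ a ∈ n.divisors, a) * ∑ b ∈ A, b := by
    cases i using Fin.lastCases with
    | last => exact sum_extendColoring_eq_last hcop hAm
    | cast i =>
      rw [sum_extendColoring_eq_castSucc hcop, sum_filter_notMem_eq_mul_sum hAm hAσ, ← hc i]
      ring
  exact ⟨extendColoring n m A c, fun i j => (layer_sum i).trans (layer_sum j).symm⟩
end

section
/- Let n be a near-perfect number, i.e., there exists a proper divisor d of n with σ(n) = 2n + d. Then n is a Zumkeller number if and only if σ(n) is even. -/
theorem IsKLayered.dvd_sum_divisors {n k : ℕ} (h : IsKLayered n k) :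
    k ∣ ∑ d ∈ n.divisors, d := by
  obtain ⟨c, hc⟩ := h
  refine ⟨∑ d ∈ n.divisors with c d = c 0, d, ?_⟩
  calc ∑ d ∈ n.divisors, d
      = ∑ i, ∑ d ∈ n.divisors with c d = i, d := (Finset.sum_fiberwise _ c _).symm
    _ = ∑ _i : Fin k, ∑ d ∈ n.divisors with c d = c 0, d :=
        Finset.sum_congr rfl fun i _ ↦ hc i (c 0)
    _ = k * ∑ d ∈ n.divisors with c d = c 0, d := by simp

theorem isKLayered_two_of_subset_divisors {n : ℕ} {s : Finset ℕ} (hs : s ⊆ n.divisors)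
    (hsum : ∑ d ∈ n.divisors, d = 2 * ∑ d ∈ s, d) : IsKLayered n 2 := by
  let c : ℕ → Fin 2 := fun d ↦ if d ∈ s then 0 else 1
  have fiber_zero : n.divisors.filter (c · = 0) = s := by
    simpa [c, Finset.filter_mem_eq_inter] using hs
  have fiber_one : n.divisors.filter (c · = 1) = n.divisors \ s := by
    simp [c, Finset.filter_notMem_eq_sdiff]
  have sum_compl : ∑ d ∈ n.divisors \ s, d = ∑ d ∈ s, d := by
    have := Finset.sum_sdiff (f := fun d ↦ d) hs
    omega
  refine ⟨c, ?_⟩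
  simp [Fin.forall_fin_two, fiber_zero, fiber_one, sum_compl]

theorem isKLayered_two_of_sum_divisors_eq {n m : ℕ} (hmn : m ∈ n.properDivisors)
    (hsum : ∑ d ∈ n.divisors, d = 2 * (n + m)) : IsKLayered n 2 := by
  obtain ⟨hdvd, hlt⟩ := Nat.mem_properDivisors.mp hmn
  have subset_divisors : {n, m} ⊆ n.divisors := by
    simp [Finset.insert_subset_iff, hdvd, Nat.ne_zero_of_lt hlt]
  apply isKLayered_two_of_subset_divisors subset_divisors
  rw [hsum, Finset.sum_pair hlt.ne']

/-- This also covers `n = 70` with `d = 4`, although `70` is not near-perfect. -/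
theorem nearPerfect_zumkeller_iff_general (n : ℕ)
    (hnp : ∃ d : ℕ, d ∣ 2 * n ∧ d < 2 * n ∧ (∑ e ∈ n.divisors, e) = 2 * n + d) :
    IsKLayered n 2 ↔ Even (∑ d ∈ n.divisors, d) := by
  obtain ⟨d, hdvd, hlt, hsum⟩ := hnp
  refine ⟨fun h ↦ even_iff_two_dvd.mpr h.dvd_sum_divisors, fun heven ↦ ?_⟩
  obtain ⟨m, rfl⟩ : 2 ∣ d := by
    rw [hsum] at heven
    exact (Nat.dvd_add_right (dvd_mul_right 2 n)).mp heven.two_dvd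
  have hm : m ∈ n.properDivisors := Nat.mem_properDivisors.mpr
    ⟨Nat.dvd_of_mul_dvd_mul_left two_pos hdvd, Nat.lt_of_mul_lt_mul_left hlt⟩
  exact isKLayered_two_of_sum_divisors_eq hm (by rw [hsum, mul_add])

/-- Let `n` be a near-perfect number, i.e., there is a proper divisor `d` of `n` with
`σ(n) = 2 * n + d`. Then `n` is a Zumkeller number (i.e., 2-layered) if and only if
`σ(n)` is even. -/
theorem nearPerfect_zumkeller_iff (n : ℕ) (hn : 0 < n)
    (hnp : ∃ d : ℕ, d ∣ n ∧ d < n ∧ (∑ e ∈ n.divisors, e) = 2 * n + d) :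
    IsKLayered n 2 ↔ Even (∑ d ∈ n.divisors, d) := by
  obtain ⟨d, hdvd, hlt, hsum⟩ := hnp
  exact nearPerfect_zumkeller_iff_general n ⟨d, hdvd.mul_left 2, by lia, hsum⟩
end
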